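/- arXiv:1106.0695 — 2 statements merged into one kernel-verified Lean document; each statement's English description precedes it below -/
import Mathlib

section
/- Let a, b be finite tuples from L, let p be a Kolchin polynomial of (a,b) over K, q a Kolchin polynomial of a over K, and r a Kolchin polynomial of b over K⟨a⟩. If deg q > deg r, then deg p = deg q and leadingCoeff(p) = leadingCoeff(q); i.e., α((a,b)/K) = α(a/K). -/
open Polynomial

/-- Iterated application of the derivations `δ` according to the multi-exponent `e`:
`x ↦ δ₁^[e 1] (δ₂^[e 2] (⋯ (δ_m^[e m] x)))`. -/
def thetaApply {L : Type*} {m : ℕ} (δ : Fin m → L → L) (e : Fin m → ℕ) : L → L :=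
  (List.ofFn (fun i => (δ i)^[e i])).foldr (· ∘ ·) id

/-- A subfield of `L` is a differential subfield if it is closed under each derivation. -/
def IsDiffSubfield {L : Type*} [Field L] {m : ℕ} (δ : Fin m → L → L) (K : Subfield L) : Prop :=
  ∀ i : Fin m, ∀ x ∈ K, δ i x ∈ K

/-- The transcendence degree (as a natural number) of an intermediate field over the base. -/
noncomputable def trdegNat {L : Type*} [Field L] (K : Subfield L) (E : IntermediateField K L) : ℕ :=
  (⨆ s : {s : Set E // AlgebraicIndependent K ((↑) : s → E)}, Cardinal.mk s.1).toNat

/-- `T_{η/K}(s)`: the transcendence degree over `K` of the subfield of `L` generated by `K`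
together with all `δ₁^(e 1) ⋯ δ_m^(e m) (η j)` with `e 1 + ⋯ + e m ≤ s`. -/
noncomputable def diffTrdeg {L : Type*} [Field L] {m n : ℕ} (δ : Fin m → L → L) (K : Subfield L)
    (η : Fin n → L) (s : ℕ) : ℕ :=
  trdegNat K (IntermediateField.adjoin K
    {x : L | ∃ e : Fin m → ℕ, (∑ i, e i) ≤ s ∧ ∃ j : Fin n, x = thetaApply δ e (η j)})

/-- `p` is a Kolchin polynomial of `η` over `K` if `p(s) = T_{η/K}(s)` for all large `s`. -/
def IsKolchinPoly {L : Type*} [Field L] {m n : ℕ} (δ : Fin m → L → L) (K : Subfield L)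
    (η : Fin n → L) (p : ℚ[X]) : Prop :=
  ∃ s₀ : ℕ, ∀ s : ℕ, s₀ ≤ s → p.eval (s : ℚ) = (diffTrdeg δ K η s : ℚ)

/-- `K⟨S⟩`: the smallest differential subfield of `L` containing `K` and `S`. -/
def diffAdjoin {L : Type*} [Field L] {m : ℕ} (δ : Fin m → L → L) (K : Subfield L)
    (S : Set L) : Subfield L :=
  sInf {F : Subfield L | IsDiffSubfield δ F ∧ K ≤ F ∧ S ⊆ F}

theorem AlgebraicIndependent.mem_matroid_closure_iff {K L : Type*} [Field K] [Field L]
    [Algebra K L] {S : Set L} {x : L} :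
    x ∈ (AlgebraicIndependent.matroid K L).closure S ↔
      IsAlgebraic (IntermediateField.adjoin K S) x := by
  rw [AlgebraicIndependent.matroid_closure_eq, SetLike.mem_coe,
    IntermediateField.isAlgebraic_adjoin_iff]
  rfl

theorem AlgebraicIndependent.adjoin_subset_matroid_closure {K L : Type*} [Field K] [Field L]
    [Algebra K L] (S : Set L) :
    (IntermediateField.adjoin K S : Set L) ⊆ (AlgebraicIndependent.matroid K L).closure S :=
  fun x hx => mem_matroid_closure_iff.mpr
    (isAlgebraic_algebraMap (⟨x, hx⟩ : IntermediateField.adjoin K S))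

theorem trdegNat_adjoin_eq_toNat_eRk {L : Type*} [Field L] (K : Subfield L) (S : Set L) :
    trdegNat K (IntermediateField.adjoin K S) =
      ((AlgebraicIndependent.matroid K L).eRk S).toNat := by
  change (Algebra.trdeg K (IntermediateField.adjoin K S)).toNat = _
  obtain ⟨B, hB⟩ := (AlgebraicIndependent.matroid K L).exists_isBasis S
  rw [← hB.encard_eq_eRk]
  obtain ⟨hind, hBS, -⟩ := AlgebraicIndependent.matroid_isBasis_iff.mp hB
  let E := IntermediateField.adjoin K S
  let x : B → E := fun b => ⟨b, IntermediateField.subset_adjoin K S (hBS b.2)⟩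
  have hx : AlgebraicIndependent K x := AlgebraicIndependent.of_comp E.val hind
  have htb : IsTranscendenceBasis K x := by
    rw [hx.isTranscendenceBasis_iff_isAlgebraic]
    refine ⟨fun y => ?_⟩
    have hrange : (Algebra.adjoin K (Set.range x)).map E.val = Algebra.adjoin K B := by
      rw [AlgHom.map_adjoin, ← Set.range_comp]
      congr 1
      ext z
      simp [x]
    have hy : IsAlgebraic ((Algebra.adjoin K (Set.range x)).map E.val) (y : L) := by
      rw [hrange, ← IntermediateField.isAlgebraic_adjoin_iff,
        ← AlgebraicIndependent.mem_matroid_closure_iff, hB.closure_eq_closure]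
      exact AlgebraicIndependent.adjoin_subset_matroid_closure S y.2
    exact hy.of_ringHom_of_comp_eq (g := E.val.toRingHom)
      ((Algebra.adjoin K (Set.range x)).equivMapOfInjective E.val E.val.injective).toRingHom
      (AlgEquiv.surjective _) E.val.injective rfl
  rw [← htb.cardinalMk_eq_trdeg]
  rfl

theorem thetaApply_add_single {L : Type*} : ∀ {m : ℕ} (δ : Fin m → L → L)
    (_ : ∀ i j x, δ i (δ j x) = δ j (δ i x)) (e : Fin m → ℕ) (i : Fin m) (x : L),
    thetaApply δ (e + Pi.single i 1) x = δ i (thetaApply δ e x)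
  | 0, _, _, _, i, _ => i.elim0
  | m + 1, δ, hcomm, e, i, x => by
    have key : ∀ (f : Fin (m + 1) → ℕ) (y : L), thetaApply δ f y =
        (δ 0)^[f 0] (thetaApply (fun k : Fin m => δ k.succ) (fun k => f k.succ) y) := by
      intro f y
      simp [thetaApply, List.ofFn_succ]
    rw [key, key]
    refine Fin.cases ?_ (fun k => ?_) i
    · have : (fun k : Fin m => (e + Pi.single 0 1 : Fin (m + 1) → ℕ) k.succ) =
          fun k => e k.succ := by
        ext k; simp
      rw [this]
      simp [Function.iterate_succ_apply']
    · have : (fun l : Fin m => (e + Pi.single k.succ 1 : Fin (m + 1) → ℕ) l.succ) =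
          (fun l => e l.succ) + Pi.single k 1 := by
        ext l; simp [Pi.single_apply]
      rw [this, thetaApply_add_single _ (fun i j => hcomm i.succ j.succ)]
      have hc : Function.Commute (δ k.succ) (δ 0) := fun y => hcomm _ _ y
      simpa using ((hc.iterate_right (e 0)) _).symm

/-- A derivation that maps a subfield and a set `S` into `E` maps every `x ∈ E` that is algebraic
over the field generated by `S` into `E`. -/
theorem Derivation.apply_mem_of_isAlgebraic {L : Type*} [Field L] [CharZero L]
    (D : Derivation ℤ L L) {K : Subfield L} (hK : ∀ x ∈ K, D x ∈ K) {S : Set L}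
    {E : IntermediateField K L} (hS : S ⊆ E) (hDS : ∀ s ∈ S, D s ∈ E) {x : L} (hx : x ∈ E)
    (halg : IsAlgebraic (IntermediateField.adjoin K S) x) : D x ∈ E := by
  set F := IntermediateField.adjoin K S
  have hFE : F ≤ E := IntermediateField.adjoin_le_iff.mpr hS
  have hDF : ∀ y ∈ F, D y ∈ E := by
    intro y hy
    induction hy using IntermediateField.adjoin_induction with
    | mem s hs => exact hDS s hs
    | algebraMap k => exact E.algebraMap_mem ⟨D k, hK k k.2⟩
    | add y z _ _ hy hz => rw [map_add]; exact add_mem hy hz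
    | inv y hy hDy =>
      rw [Derivation.leibniz_inv]
      exact mul_mem (neg_mem (pow_mem (inv_mem (hFE hy)) 2)) hDy
    | mul y z hy hz hDy hDz =>
      rw [Derivation.leibniz]
      exact add_mem (mul_mem (hFE hy) hDz) (mul_mem (hFE hz) hDy)
  set P := minpoly F x
  have hsep : Polynomial.aeval x (Polynomial.derivative P) ≠ 0 :=
    (minpoly.irreducible halg.isIntegral).separable.aeval_derivative_ne_zero (minpoly.aeval F x)
  have hpoly : ∀ Q : F[X], ∃ c ∈ E,
      D (Polynomial.aeval x Q) = c + Polynomial.aeval x (Polynomial.derivative Q) * D x := by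
    intro Q
    induction Q using Polynomial.induction_on' with
    | add Q R hQ hR =>
      obtain ⟨c, hc, hc'⟩ := hQ
      obtain ⟨d, hd, hd'⟩ := hR
      refine ⟨c + d, add_mem hc hd, ?_⟩
      simp only [map_add, hc', hd']
      ring
    | monomial n a =>
      refine ⟨x ^ n * D a, mul_mem (pow_mem hx n) (hDF a a.2), ?_⟩
      rw [Polynomial.derivative_monomial, Polynomial.aeval_monomial, Polynomial.aeval_monomial,
        Derivation.leibniz, Derivation.leibniz_pow]
      simp [IntermediateField.algebraMap_apply]
      ring
  have haeval : ∀ Q : F[X], Polynomial.aeval x Q ∈ E := by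
    intro Q
    rw [Polynomial.aeval_eq_sum_range]
    exact sum_mem fun i _ => mul_mem (hFE (Q.coeff i).2) (pow_mem hx i)
  obtain ⟨c, hc, hPc⟩ := hpoly P
  rw [minpoly.aeval, map_zero] at hPc
  have hDx : D x = -c / Polynomial.aeval x (Polynomial.derivative P) := by
    rw [eq_div_iff hsep]
    linear_combination -hPc
  rw [hDx]
  exact div_mem (neg_mem hc) (haeval _)

theorem Polynomial.leadingCoeff_nonneg_of_eventually_eval_natCast_nonneg {f : ℚ[X]} {N : ℕ}
    (h : ∀ n : ℕ, N ≤ n → 0 ≤ f.eval (n : ℚ)) : 0 ≤ f.leadingCoeff := by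
  by_contra! hlt
  rcases le_or_gt f.degree 0 with hd | hd
  · have := h N le_rfl
    rw [Polynomial.eq_C_of_degree_le_zero hd] at this hlt
    simp at this hlt
    linarith
  · have := (f.tendsto_atBot_of_leadingCoeff_nonpos hd hlt.le).comp
      (tendsto_natCast_atTop_atTop (R := ℚ))
    obtain ⟨n, hn, hn'⟩ := ((this.eventually_lt_atBot 0).and (Filter.eventually_ge_atTop N)).exists
    exact (h n hn').not_gt hn

theorem Polynomial.degree_eq_and_leadingCoeff_eq_of_eventually_le {p q r : ℚ[X]} {c N : ℕ}
    (h₁ : ∀ n : ℕ, N ≤ n → q.eval (n : ℚ) ≤ p.eval (n : ℚ))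
    (h₂ : ∀ n : ℕ, N ≤ n → p.eval (n : ℚ) ≤ q.eval ((n + c : ℕ) : ℚ) + r.eval (n : ℚ))
    (hdeg : r.degree < q.degree) :
    p.degree = q.degree ∧ p.leadingCoeff = q.leadingCoeff := by
  have hq : q ≠ 0 := by rintro rfl; simp at hdeg
  set g := Polynomial.taylor (c : ℚ) q - q + r
  have hg : g.degree < q.degree := by
    refine (Polynomial.degree_add_le _ _).trans_lt (max_lt ?_ hdeg)
    rw [← Polynomial.degree_taylor q (c : ℚ)]
    refine Polynomial.degree_sub_lt_left (by simp) (by simpa using hq) (by simp)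
  have hpq : (p - q).degree ≤ g.degree := by
    by_contra! hlt
    have hpos : 0 ≤ (p - q).leadingCoeff :=
      leadingCoeff_nonneg_of_eventually_eval_natCast_nonneg (N := N) fun n hn => by
        simpa using h₁ n hn
    have hneg : 0 ≤ (g - (p - q)).leadingCoeff :=
      leadingCoeff_nonneg_of_eventually_eval_natCast_nonneg (N := N) fun n hn => by
        have := h₂ n hn
        push_cast at this
        simp [g, Polynomial.taylor_eval]
        linarith
    rw [← neg_sub, Polynomial.leadingCoeff_neg,
      Polynomial.leadingCoeff_sub_of_degree_lt hlt] at hneg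
    have : (p - q).leadingCoeff = 0 := by linarith
    rw [Polynomial.leadingCoeff_eq_zero] at this
    simp [this] at hlt
  have hlt := hpq.trans_lt hg
  have hsplit : p = p - q + q := by ring
  rw [hsplit]
  exact ⟨Polynomial.degree_add_eq_right_of_degree_lt hlt,
    Polynomial.leadingCoeff_add_of_degree_lt hlt⟩

theorem Matroid.indep_image_of_forall_notMem_closure {ι α : Type*} [LinearOrder ι] (M : Matroid α)
    (v : ι → α) (T : Finset ι) (hE : ∀ i ∈ T, v i ∈ M.E)
    (hT : ∀ i ∈ T, v i ∉ M.closure (v '' Set.Iio i)) : M.Indep (v '' T) := by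
  induction T using Finset.induction_on_max with
  | empty => simp
  | insert i T hi ih =>
    rw [Finset.coe_insert, Set.image_insert_eq,
      (ih (fun j hj => hE j (Finset.mem_insert_of_mem hj))
        fun j hj => hT j (Finset.mem_insert_of_mem hj)).insert_indep_iff]
    refine Or.inl ⟨hE i (Finset.mem_insert_self i T), fun h => ?_⟩
    exact hT i (Finset.mem_insert_self i T)
      (M.closure_subset_closure (Set.image_mono fun j hj => hi j hj) h)

/-- Pairs of a derivative multi-exponent and a coordinate, with an orderly ranking. -/
abbrev DiffIndex (m n : ℕ) : Type := DegLex (Fin m →₀ ℕ) ×ₗ Fin n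

namespace DiffIndex

variable {m n : ℕ}

/-- The index of the derivative with multi-exponent `e` of the `j`-th coordinate. -/
def mk (e : Fin m →₀ ℕ) (j : Fin n) : DiffIndex m n := toLex (toDegLex e, j)

/-- The multi-exponent of an index. -/
def exponent (u : DiffIndex m n) : Fin m →₀ ℕ := ofDegLex (ofLex u).1

/-- The coordinate of an index. -/
def coord (u : DiffIndex m n) : Fin n := (ofLex u).2

@[simp] theorem exponent_mk (e : Fin m →₀ ℕ) (j : Fin n) : (mk e j).exponent = e := rfl

@[simp] theorem coord_mk (e : Fin m →₀ ℕ) (j : Fin n) : (mk e j).coord = j := rfl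

theorem degree_le_of_lt {u v : DiffIndex m n} (h : u < v) :
    u.exponent.degree ≤ v.exponent.degree :=
  Finsupp.DegLex.monotone_degree (Prod.Lex.monotone_fst u v h.le)

theorem mk_lt_mk_add_single (e : Fin m →₀ ℕ) (j : Fin n) (i : Fin m) :
    mk e j < mk (e + Finsupp.single i 1) j := by
  refine Prod.Lex.toLex_lt_toLex.mpr (Or.inl ?_)
  rw [Finsupp.DegLex.lt_iff]
  left
  simp

theorem mk_add_lt_mk_add {u v : DiffIndex m n} (h : u < v) (d : Fin m →₀ ℕ) :
    mk (u.exponent + d) u.coord < mk (v.exponent + d) v.coord := by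
  rcases Prod.Lex.lt_iff.mp h with h | ⟨h, h'⟩
  · refine Prod.Lex.toLex_lt_toLex.mpr (Or.inl ?_)
    rw [toDegLex_add, toDegLex_add]
    exact add_lt_add_left h _
  · refine Prod.Lex.toLex_lt_toLex.mpr (Or.inr ⟨?_, h'⟩)
    exact congrArg (fun x => toDegLex (ofDegLex x + d)) h

theorem finite_setOf_degree_le (m n s : ℕ) :
    {u : DiffIndex m n | u.exponent.degree ≤ s}.Finite := by
  have h := (Finsupp.finite_of_degree_le (σ := Fin m) s).prod (Set.finite_univ (α := Fin n))
  exact (h.image fun x => mk x.1 x.2).subset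
    fun u hu => ⟨(u.exponent, u.coord), ⟨hu, Set.mem_univ _⟩, rfl⟩

end DiffIndex

section

variable {L : Type*} {m : ℕ} (δ : Fin m → L → L)

/-- The derivative of `η` with index `u`. -/
def thetaVal {n : ℕ} (η : Fin n → L) (u : DiffIndex m n) : L :=
  thetaApply δ u.exponent (η u.coord)

/-- The derivatives of `η` of order at most `s`. -/
def thetaSet {n : ℕ} (η : Fin n → L) (s : ℕ) : Set L :=
  {x : L | ∃ e : Fin m → ℕ, (∑ i, e i) ≤ s ∧ ∃ j : Fin n, x = thetaApply δ e (η j)}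

variable {n : ℕ} (η : Fin n → L)

theorem thetaSet_eq_image (s : ℕ) :
    thetaSet δ η s = thetaVal δ η '' {u | u.exponent.degree ≤ s} := by
  ext x
  constructor
  · rintro ⟨e, he, j, rfl⟩
    refine ⟨DiffIndex.mk (Finsupp.equivFunOnFinite.symm e) j, ?_, by simp [thetaVal]⟩
    simpa [Finsupp.degree_eq_sum] using he
  · rintro ⟨u, hu, rfl⟩
    exact ⟨u.exponent, by simpa [Finsupp.degree_eq_sum] using hu, u.coord, rfl⟩

theorem thetaVal_mem_thetaSet {u : DiffIndex m n} {s : ℕ} (h : u.exponent.degree ≤ s) :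
    thetaVal δ η u ∈ thetaSet δ η s := by
  rw [thetaSet_eq_image]
  exact Set.mem_image_of_mem _ h

theorem thetaSet_finite (s : ℕ) : (thetaSet δ η s).Finite := by
  rw [thetaSet_eq_image]
  exact (DiffIndex.finite_setOf_degree_le m n s).image _

theorem thetaSet_mono : Monotone (thetaSet δ η) :=
  fun _ _ hst _ ⟨e, he, h⟩ => ⟨e, he.trans hst, h⟩

theorem mem_thetaSet_zero (j : Fin n) : η j ∈ thetaSet δ η 0 :=
  by
  refine ⟨0, by simp, j, ?_⟩
  suffices h : ∀ k, (List.replicate k (id : L → L)).foldr (· ∘ ·) id = id by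
    simp [thetaApply, h]
  intro k
  induction k with
  | zero => rfl
  | succ k ih => simp [List.replicate_succ, ih]

variable {δ}

theorem thetaVal_mk_add_single (hcomm : ∀ i j x, δ i (δ j x) = δ j (δ i x))
    (u : DiffIndex m n) (i : Fin m) :
    thetaVal δ η (DiffIndex.mk (u.exponent + Finsupp.single i 1) u.coord) =
      δ i (thetaVal δ η u) := by
  simp only [thetaVal, DiffIndex.exponent_mk, DiffIndex.coord_mk, Finsupp.coe_add,
    Finsupp.single_eq_pi_single]
  exact thetaApply_add_single δ hcomm _ i _

theorem apply_mem_thetaSet_succ (hcomm : ∀ i j x, δ i (δ j x) = δ j (δ i x)) {s : ℕ} {x : L}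
    (hx : x ∈ thetaSet δ η s) (i : Fin m) : δ i x ∈ thetaSet δ η (s + 1) := by
  rw [thetaSet_eq_image] at hx
  obtain ⟨u, hu, rfl⟩ := hx
  rw [← thetaVal_mk_add_single η hcomm]
  exact thetaVal_mem_thetaSet δ η (by simpa using hu)

end

section

variable {L : Type*} [Field L] {m : ℕ}

/-- An additive map satisfying the Leibniz rule, as a derivation. -/
def derivationOfLeibniz (d : L → L) (hadd : ∀ x y, d (x + y) = d x + d y)
    (hleib : ∀ x y, d (x * y) = x * d y + d x * y) : Derivation ℤ L L :=
  Derivation.mk' (AddMonoidHom.mk' d hadd).toIntLinearMap fun x y => by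
    simp [hleib, mul_comm y]

theorem diffAdjoin_le_adjoin_iUnion_thetaSet {n : ℕ} {δ : Fin m → L → L}
    (hadd : ∀ i x y, δ i (x + y) = δ i x + δ i y)
    (hleib : ∀ i x y, δ i (x * y) = x * δ i y + δ i x * y)
    (hcomm : ∀ i j x, δ i (δ j x) = δ j (δ i x))
    {K : Subfield L} (hK : IsDiffSubfield δ K) (η : Fin n → L) :
    diffAdjoin δ K (Set.range η) ≤
      (IntermediateField.adjoin K (⋃ s, thetaSet δ η s)).toSubfield := by
  refine sInf_le ⟨fun i x hx => ?_, fun x hx => ?_, ?_⟩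
  · set D := derivationOfLeibniz (δ i) (hadd i) (hleib i)
    have hx' : x ∈ IntermediateField.adjoin K (⋃ s, thetaSet δ η s) := hx
    change D x ∈ IntermediateField.adjoin K (⋃ s, thetaSet δ η s)
    induction hx' using IntermediateField.adjoin_induction with
    | mem s hs =>
      obtain ⟨t, ht⟩ := Set.mem_iUnion.mp hs
      exact IntermediateField.subset_adjoin _ _
        (Set.mem_iUnion_of_mem (t + 1) (apply_mem_thetaSet_succ η hcomm ht i))
    | algebraMap k => exact IntermediateField.algebraMap_mem _ (⟨D k, hK i k k.2⟩ : K)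
    | add y z hy hz hDy hDz => rw [map_add]; exact add_mem (hDy hy) (hDz hz)
    | inv y hy hDy =>
      rw [Derivation.leibniz_inv]
      exact mul_mem (neg_mem (pow_mem (inv_mem hy) 2)) (hDy hy)
    | mul y z hy hz hDy hDz =>
      rw [Derivation.leibniz]
      exact add_mem (mul_mem hy (hDz hz)) (mul_mem hz (hDy hy))
  · exact IntermediateField.algebraMap_mem _ (⟨x, hx⟩ : K)
  · rintro _ ⟨j, rfl⟩
    exact IntermediateField.subset_adjoin _ _ (Set.mem_iUnion_of_mem 0 (mem_thetaSet_zero δ η j))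

theorem mem_matroid_closure_union_of_le_adjoin {K F : Subfield L} {S T : Set L} {x : L}
    (hF : F ≤ (IntermediateField.adjoin K S).toSubfield)
    (hx : x ∈ (AlgebraicIndependent.matroid F L).closure T) :
    x ∈ (AlgebraicIndependent.matroid K L).closure (S ∪ T) := by
  rw [AlgebraicIndependent.mem_matroid_closure_iff] at hx ⊢
  have hle : ∀ y ∈ IntermediateField.adjoin F T, y ∈ IntermediateField.adjoin K (S ∪ T) := by
    intro y hy
    induction hy using IntermediateField.adjoin_induction with
    | mem s hs => exact IntermediateField.subset_adjoin _ _ (Or.inr hs)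
    | algebraMap k =>
      exact IntermediateField.adjoin.mono K _ _ Set.subset_union_left (hF k.2)
    | add y z _ _ hy hz => exact add_mem hy hz
    | inv y _ hy => exact inv_mem hy
    | mul y z _ _ hy hz => exact mul_mem hy hz
  let f : IntermediateField.adjoin F T →+* IntermediateField.adjoin K (S ∪ T) :=
    Subfield.inclusion (S := (IntermediateField.adjoin F T).toSubfield)
      (T := (IntermediateField.adjoin K (S ∪ T)).toSubfield) hle
  exact hx.ringHom_of_comp_eq f (RingHom.id L) f.injective rfl

theorem exists_mem_matroid_closure_thetaSet_union {n : ℕ} {δ : Fin m → L → L}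
    (hadd : ∀ i x y, δ i (x + y) = δ i x + δ i y)
    (hleib : ∀ i x y, δ i (x * y) = x * δ i y + δ i x * y)
    (hcomm : ∀ i j x, δ i (δ j x) = δ j (δ i x))
    {K : Subfield L} (hK : IsDiffSubfield δ K) (η : Fin n → L) {T : Set L} {x : L}
    (hx : x ∈ (AlgebraicIndependent.matroid (diffAdjoin δ K (Set.range η)) L).closure T) :
    ∃ c, x ∈ (AlgebraicIndependent.matroid K L).closure (thetaSet δ η c ∪ T) := by
  obtain ⟨I, hI, hIfin, -, hxI⟩ := Matroid.exists_mem_finite_closure_of_mem_closure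
    (mem_matroid_closure_union_of_le_adjoin
      (diffAdjoin_le_adjoin_iUnion_thetaSet hadd hleib hcomm hK η) hx)
  rw [Set.iUnion_union] at hI
  have hdir : Directed (· ⊆ ·) fun c => thetaSet δ η c ∪ T :=
    Monotone.directed_le fun _ _ h => Set.union_subset_union_left T (thetaSet_mono δ η h)
  obtain ⟨c, hc⟩ := hdir.exists_mem_subset_of_finset_subset_biUnion (s := hIfin.toFinset)
    (by simpa using hI)
  exact ⟨c, Matroid.closure_subset_closure _ (by simpa using hc) hxI⟩

variable [CharZero L] {δ : Fin m → L → L} {n₁ n₂ : ℕ} (a : Fin n₁ → L) (b : Fin n₂ → L)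

theorem thetaVal_mem_matroid_closure_of_le
    (hadd : ∀ i x y, δ i (x + y) = δ i x + δ i y)
    (hleib : ∀ i x y, δ i (x * y) = x * δ i y + δ i x * y)
    (hcomm : ∀ i j x, δ i (δ j x) = δ j (δ i x))
    {K : Subfield L} (hK : IsDiffSubfield δ K) {c : ℕ} (j : Fin n₂) (d e : Fin m →₀ ℕ)
    (h : thetaVal δ b (.mk e j) ∈ (AlgebraicIndependent.matroid K L).closure
      (thetaSet δ a (c + e.degree) ∪ thetaVal δ b '' Set.Iio (.mk e j))) :
    thetaVal δ b (.mk (e + d) j) ∈ (AlgebraicIndependent.matroid K L).closure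
      (thetaSet δ a (c + (e + d).degree) ∪ thetaVal δ b '' Set.Iio (.mk (e + d) j)) := by
  induction d using Finsupp.induction_linear generalizing e with
  | zero => simpa using h
  | add d₁ d₂ h₁ h₂ => rw [← add_assoc]; exact h₂ _ (h₁ _ h)
  | single i k =>
    induction k with
    | zero => simpa using h
    | succ k ih =>
      rw [Finsupp.single_add, ← add_assoc]
      set f := e + Finsupp.single i k
      set D := derivationOfLeibniz (δ i) (hadd i) (hleib i)
      have hsub : thetaVal δ b '' Set.Iio (.mk f j) ⊆
          thetaVal δ b '' Set.Iio (.mk (f + Finsupp.single i 1) j) :=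
        Set.image_mono (Set.Iio_subset_Iio (DiffIndex.mk_lt_mk_add_single f j i).le)
      have hdeg : c + (f + Finsupp.single i 1).degree = c + f.degree + 1 := by
        simp [add_assoc]
      rw [hdeg]
      apply AlgebraicIndependent.adjoin_subset_matroid_closure
      have hval : thetaVal δ b (.mk (f + Finsupp.single i 1) j) =
          D (thetaVal δ b (.mk f j)) := thetaVal_mk_add_single b hcomm (.mk f j) i
      rw [hval]
      refine D.apply_mem_of_isAlgebraic (hK i) (S := thetaSet δ a (c + f.degree) ∪
        thetaVal δ b '' Set.Iio (.mk f j)) ?_ ?_ ?_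
        (AlgebraicIndependent.mem_matroid_closure_iff.mp ih)
      · exact (Set.union_subset_union (thetaSet_mono δ a (Nat.le_succ _)) hsub).trans
          (IntermediateField.subset_adjoin _ _)
      · rintro s (hs | ⟨u, hu, rfl⟩)
        · exact IntermediateField.subset_adjoin _ _
            (Or.inl (apply_mem_thetaSet_succ a hcomm hs i))
        · exact IntermediateField.subset_adjoin _ _ (Or.inr ⟨_,
            DiffIndex.mk_add_lt_mk_add hu (Finsupp.single i 1), thetaVal_mk_add_single b hcomm u i⟩)
      · exact IntermediateField.subset_adjoin _ _
          (Or.inr ⟨.mk f j, DiffIndex.mk_lt_mk_add_single f j i, rfl⟩)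

theorem exists_forall_thetaVal_mem_matroid_closure
    (hadd : ∀ i x y, δ i (x + y) = δ i x + δ i y)
    (hleib : ∀ i x y, δ i (x * y) = x * δ i y + δ i x * y)
    (hcomm : ∀ i j x, δ i (δ j x) = δ j (δ i x))
    {K : Subfield L} (hK : IsDiffSubfield δ K) :
    ∃ c : ℕ, ∀ u : DiffIndex m n₂,
      thetaVal δ b u ∈ (AlgebraicIndependent.matroid (diffAdjoin δ K (Set.range a)) L).closure
        (thetaVal δ b '' Set.Iio u) →
      thetaVal δ b u ∈ (AlgebraicIndependent.matroid K L).closure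
        (thetaSet δ a (c + u.exponent.degree) ∪ thetaVal δ b '' Set.Iio u) := by
  let P (j : Fin n₂) (e : Fin m →₀ ℕ) : Prop := thetaVal δ b (.mk e j) ∈
    (AlgebraicIndependent.matroid (diffAdjoin δ K (Set.range a)) L).closure
      (thetaVal δ b '' Set.Iio (.mk e j))
  let Q (c : ℕ) (j : Fin n₂) (e : Fin m →₀ ℕ) : Prop := thetaVal δ b (.mk e j) ∈
    (AlgebraicIndependent.matroid K L).closure
      (thetaSet δ a (c + e.degree) ∪ thetaVal δ b '' Set.Iio (.mk e j))
  have hmono : ∀ {c c' j e}, c ≤ c' → Q c j e → Q c' j e := fun hc h =>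
    Matroid.closure_subset_closure _ (Set.union_subset_union_left _
      (thetaSet_mono δ a (Nat.add_le_add_right hc _))) h
  have hfin : ∀ j, {e | Minimal (P j) e}.Finite := fun j =>
    WellQuasiOrderedLE.finite_of_isAntichain (setOfPred_minimal_antichain (P j))
  have hone : ∀ j e, ∃ c, P j e → Q c j e := by
    intro j e
    by_cases h : P j e
    · obtain ⟨c, hc⟩ := exists_mem_matroid_closure_thetaSet_union hadd hleib hcomm hK a h
      exact ⟨c, fun _ => Matroid.closure_subset_closure _ (Set.union_subset_union_left _
        (thetaSet_mono δ a (Nat.le_add_right _ _))) hc⟩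
    · exact ⟨0, fun h' => absurd h' h⟩
  choose c hc using hone
  refine ⟨Finset.univ.sup fun j => (hfin j).toFinset.sup (c j), fun u hu => ?_⟩
  obtain ⟨e, he, hmin⟩ := exists_minimal_le_of_wellFoundedLT (P u.coord) u.exponent hu
  have hQ : Q (Finset.univ.sup fun j => (hfin j).toFinset.sup (c j)) u.coord e :=
    hmono ((Finset.le_sup (f := c u.coord) ((hfin _).mem_toFinset.mpr hmin)).trans
      (Finset.le_sup (f := fun j => (hfin j).toFinset.sup (c j)) (Finset.mem_univ u.coord)))
      (hc _ _ hmin.prop)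
  have := thetaVal_mem_matroid_closure_of_le a b hadd hleib hcomm hK u.coord
    (u.exponent - e) e hQ
  rwa [add_tsub_cancel_of_le he] at this

theorem exists_eRk_thetaSet_append_le
    (hadd : ∀ i x y, δ i (x + y) = δ i x + δ i y)
    (hleib : ∀ i x y, δ i (x * y) = x * δ i y + δ i x * y)
    (hcomm : ∀ i j x, δ i (δ j x) = δ j (δ i x))
    {K : Subfield L} (hK : IsDiffSubfield δ K) :
    ∃ c : ℕ, ∀ s : ℕ, (AlgebraicIndependent.matroid K L).eRk (thetaSet δ (Fin.append a b) s) ≤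
      (AlgebraicIndependent.matroid K L).eRk (thetaSet δ a (s + c)) +
      (AlgebraicIndependent.matroid (diffAdjoin δ K (Set.range a)) L).eRk (thetaSet δ b s) := by
  classical
  obtain ⟨c, hc⟩ := exists_forall_thetaVal_mem_matroid_closure a b hadd hleib hcomm hK
  refine ⟨c, fun s => ?_⟩
  set M := AlgebraicIndependent.matroid K L
  set N := AlgebraicIndependent.matroid (diffAdjoin δ K (Set.range a)) L
  let T : Finset (DiffIndex m n₂) := (DiffIndex.finite_setOf_degree_le m n₂ s).toFinset.filter
    fun u => thetaVal δ b u ∉ N.closure (thetaVal δ b '' Set.Iio u)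
  have hT : N.Indep (thetaVal δ b '' T) :=
    N.indep_image_of_forall_notMem_closure _ T (fun _ _ => Set.mem_univ _)
      fun u hu => (Finset.mem_filter.mp hu).2
  have hTs : thetaVal δ b '' T ⊆ thetaSet δ b s := by
    rintro _ ⟨u, hu, rfl⟩
    exact thetaVal_mem_thetaSet δ b (by simpa using (Finset.mem_filter.mp hu).1)
  set C := thetaSet δ a (s + c) ∪ thetaVal δ b '' T
  have hb : ∀ u : DiffIndex m n₂, u.exponent.degree ≤ s → thetaVal δ b u ∈ M.closure C := by
    intro u
    induction u using WellFoundedLT.induction with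
    | ind u ih =>
      intro hu
      by_cases h : thetaVal δ b u ∈ N.closure (thetaVal δ b '' Set.Iio u)
      · refine M.closure_subset_closure_of_subset_closure ?_ (hc u h)
        rintro _ (hx | ⟨v, hv, rfl⟩)
        · exact M.mem_closure_of_mem (Or.inl (thetaSet_mono δ a (by lia) hx))
            (Set.subset_univ _)
        · exact ih v hv ((DiffIndex.degree_le_of_lt hv).trans hu)
      · exact M.mem_closure_of_mem
          (Or.inr ⟨u, Finset.mem_coe.mpr (Finset.mem_filter.mpr ⟨by simpa using hu, h⟩), rfl⟩)
          (Set.subset_univ _)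
  have hsub : thetaSet δ (Fin.append a b) s ⊆ M.closure C := by
    rintro _ ⟨e, he, j, rfl⟩
    refine Fin.addCases (fun j => ?_) (fun j => ?_) j
    · rw [Fin.append_left]
      exact M.mem_closure_of_mem (Or.inl ⟨e, he.trans (Nat.le_add_right s c), j, rfl⟩)
        (Set.subset_univ _)
    · rw [Fin.append_right]
      have := hb (.mk (Finsupp.equivFunOnFinite.symm e) j)
        (by simpa [Finsupp.degree_eq_sum] using he)
      simpa [thetaVal] using this
  calc M.eRk (thetaSet δ (Fin.append a b) s) ≤ M.eRk C :=
        (M.eRk_mono hsub).trans_eq (M.eRk_closure_eq C)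
    _ ≤ M.eRk (thetaSet δ a (s + c)) + (thetaVal δ b '' T).encard :=
        M.eRk_union_le_eRk_add_encard _ _
    _ ≤ _ := by
      rw [← hT.eRk_eq_encard]
      gcongr
      exact N.eRk_mono hTs

end

theorem natCast_diffTrdeg {L : Type*} [Field L] {m n : ℕ} (δ : Fin m → L → L) (K : Subfield L)
    (η : Fin n → L) (s : ℕ) :
    (diffTrdeg δ K η s : ℕ∞) = (AlgebraicIndependent.matroid K L).eRk (thetaSet δ η s) := by
  have h : diffTrdeg δ K η s = _ := trdegNat_adjoin_eq_toNat_eRk K (thetaSet δ η s)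
  rw [h, ENat.natCast_toNat]
  exact ((Matroid.eRk_le_encard _ _).trans_lt (thetaSet_finite δ η s).encard_lt_top).ne

/-- If `τ(a/K) > τ(b/K⟨a⟩)` then `τ((a,b)/K) = τ(a/K)` and `α((a,b)/K) = α(a/K)`. -/
theorem typical_dimension_of_gt_type
    {L : Type*} [Field L] [CharZero L] {m : ℕ} (hm : 1 ≤ m)
    (δ : Fin m → L → L)
    (hadd : ∀ i : Fin m, ∀ x y : L, δ i (x + y) = δ i x + δ i y)
    (hleib : ∀ i : Fin m, ∀ x y : L, δ i (x * y) = x * δ i y + δ i x * y)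
    (hcomm : ∀ i j : Fin m, ∀ x : L, δ i (δ j x) = δ j (δ i x))
    (K : Subfield L) (hK : IsDiffSubfield δ K)
    {n₁ n₂ : ℕ} (a : Fin n₁ → L) (b : Fin n₂ → L)
    (p q r : ℚ[X])
    (hp : IsKolchinPoly δ K (Fin.append a b) p)
    (hq : IsKolchinPoly δ K a q)
    (hr : IsKolchinPoly δ (diffAdjoin δ K (Set.range a)) b r)
    (hdeg : r.degree < q.degree) :
    p.degree = q.degree ∧ p.leadingCoeff = q.leadingCoeff := by
  have hlow : ∀ s, diffTrdeg δ K a s ≤ diffTrdeg δ K (Fin.append a b) s := by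
    intro s
    rw [← ENat.natCast_le_natCast, natCast_diffTrdeg, natCast_diffTrdeg]
    refine Matroid.eRk_mono _ ?_
    rintro _ ⟨e, he, j, rfl⟩
    exact ⟨e, he, Fin.castAdd n₂ j, by rw [Fin.append_left]⟩
  obtain ⟨c, hc⟩ := exists_eRk_thetaSet_append_le a b hadd hleib hcomm hK
  have hup : ∀ s, diffTrdeg δ K (Fin.append a b) s ≤
      diffTrdeg δ K a (s + c) + diffTrdeg δ (diffAdjoin δ K (Set.range a)) b s := by
    intro s
    rw [← ENat.natCast_le_natCast, ENat.natCast_add, natCast_diffTrdeg, natCast_diffTrdeg,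
      natCast_diffTrdeg]
    exact hc s
  obtain ⟨N₁, hp⟩ := hp
  obtain ⟨N₂, hq⟩ := hq
  obtain ⟨N₃, hr⟩ := hr
  refine Polynomial.degree_eq_and_leadingCoeff_eq_of_eventually_le (c := c) (N := N₁ + N₂ + N₃)
    (fun s hs => ?_) (fun s hs => ?_) hdeg
  · rw [hp s (by lia), hq s (by lia)]
    exact_mod_cast hlow s
  · rw [hp s (by lia), hq (s + c) (by lia), hr s (by lia)]
    exact_mod_cast hup s
end

section
/- Let A ⊆ L be a differential subfield and let x, y, z be finite tuples from L such that A⟨x⟩⟨y⟩ = A⟨x⟩⟨z⟩ (y and z generate the same differential field over A⟨x⟩, as happens when z = y·x and y = z·x⁻¹ in a matrix group). Suppose y is independent from x over A in the sense that some Kolchin polynomial of y over A⟨x⟩ is also a Kolchin polynomial of y over A. Then, for Kolchin polynomials p of y over A and q of z over A, one has deg p ≤ deg q, and if deg p = deg q then leadingCoeff(p) ≤ leadingCoeff(q); i.e., τ(y/A) ≤ τ(z/A), and in case of equality α(y/A) ≤ α(z/A). -/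
open Polynomial

section Trdeg

variable {L : Type*} [Field L]

/-- A field generated by `S` over `K` is algebraic over the ring generated by `S` over `K`. -/
theorem isAlgebraic_adjoin_preimage (K : Subfield L) (S : Set L) :
    Algebra.IsAlgebraic
      (Algebra.adjoin K ((↑) ⁻¹' S : Set (IntermediateField.adjoin K S)))
      (IntermediateField.adjoin K S) := by
  refine ⟨fun ⟨a, ha⟩ => ?_⟩
  induction ha using IntermediateField.adjoin_induction with
  | mem x hx =>
    exact isAlgebraic_algebraMap
      (⟨⟨x, IntermediateField.subset_adjoin K S hx⟩, Algebra.subset_adjoin hx⟩ :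
        Algebra.adjoin K ((↑) ⁻¹' S : Set (IntermediateField.adjoin K S)))
  | algebraMap x =>
    exact isAlgebraic_algebraMap (algebraMap K
      (Algebra.adjoin K ((↑) ⁻¹' S : Set (IntermediateField.adjoin K S))) x)
  | add x y hx hy h₁ h₂ => exact h₁.add h₂
  | inv x hx h => exact h.inv
  | mul x y hx hy h₁ h₂ => exact h₁.mul h₂

theorem trdeg_adjoin_lt_aleph0 (K : Subfield L) {S : Set L} (hS : S.Finite) :
    Algebra.trdeg K (IntermediateField.adjoin K S) < Cardinal.aleph0 := by
  have := isAlgebraic_adjoin_preimage K S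
  refine (Algebra.IsAlgebraic.trdeg_le_cardinalMk K
    ((↑) ⁻¹' S : Set (IntermediateField.adjoin K S))).trans_lt ?_
  exact Cardinal.lt_aleph0_iff_set_finite.mpr (hS.preimage Subtype.val_injective.injOn)

/-- Enlarging the base field does not increase the transcendence degree. -/
theorem trdeg_adjoin_le_of_le {K K' : Subfield L} (h : K ≤ K') (S : Set L) :
    Algebra.trdeg K' (IntermediateField.adjoin K' S) ≤
      Algebra.trdeg K (IntermediateField.adjoin K S) := by
  have := isAlgebraic_adjoin_preimage K' S
  have : FaithfulSMul K' (IntermediateField.adjoin K' S) :=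
    (faithfulSMul_iff_algebraMap_injective _ _).mpr (algebraMap K' _).injective
  obtain ⟨t, hts, ht⟩ := exists_isTranscendenceBasis_subset (R := K')
    ((↑) ⁻¹' S : Set (IntermediateField.adjoin K' S))
  rw [← ht.cardinalMk_eq_trdeg]
  have hL : AlgebraicIndependent K' (fun a : t => (a : L)) :=
    ht.1.map' (f := (IntermediateField.adjoin K' S).val) Subtype.val_injective
  have hmem (a : t) : (a : L) ∈ IntermediateField.adjoin K S :=
    IntermediateField.subset_adjoin K S (hts a.2)
  have hind : AlgebraicIndependent K
      (fun a : t => (⟨a, hmem a⟩ : IntermediateField.adjoin K S)) :=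
    AlgebraicIndependent.of_ringHom_of_comp_eq (f := Subfield.inclusion h)
      (g := algebraMap (IntermediateField.adjoin K S) L) hL
      (Subfield.inclusion h).injective rfl
  exact hind.cardinalMk_le_trdeg

theorem trdeg_le_of_le {K : Subfield L} {E F : IntermediateField K L} (h : E ≤ F) :
    Algebra.trdeg K E ≤ Algebra.trdeg K F :=
  trdeg_le_of_injective (IntermediateField.inclusion h)
    (IntermediateField.inclusion h).injective

end Trdeg

section Theta

variable {L : Type*} {m : ℕ}

theorem thetaApply_succ (δ : Fin (m + 1) → L → L) (e : Fin (m + 1) → ℕ) (u : L) :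
    thetaApply δ e u =
      (δ 0)^[e 0] (thetaApply (fun i => δ i.succ) (fun i => e i.succ) u) := by
  simp [thetaApply, List.ofFn_succ]

theorem thetaApply_zero (δ : Fin m → L → L) (u : L) : thetaApply δ 0 u = u := by
  induction m with
  | zero => simp [thetaApply]
  | succ m ih => rw [thetaApply_succ]; exact ih _

theorem apply_thetaApply {δ : Fin m → L → L} (hcomm : ∀ i j x, δ i (δ j x) = δ j (δ i x))
    (i : Fin m) (e : Fin m → ℕ) (u : L) :
    δ i (thetaApply δ e u) = thetaApply δ (e + Pi.single i 1) u := by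
  induction m with
  | zero => exact i.elim0
  | succ m ih =>
    rw [thetaApply_succ, thetaApply_succ]
    cases i using Fin.cases with
    | zero =>
      rw [← Function.iterate_succ_apply' (δ 0)]
      simp
    | succ j =>
      have hc : Function.Commute (δ j.succ) (δ 0) := hcomm _ _
      rw [(hc.iterate_right (e 0)).eq,
        ih (δ := fun i => δ i.succ) (fun _ _ _ => hcomm _ _ _)]
      have hzero : (e + Pi.single j.succ 1 : Fin (m + 1) → ℕ) 0 = e 0 := by simp
      have hsucc : (fun k : Fin m => e k.succ) + Pi.single j 1 =
          fun k => (e + Pi.single j.succ 1 : Fin (m + 1) → ℕ) k.succ := by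
        ext k
        simp [Pi.single_apply]
      rw [hzero, hsucc]

/-- If each derivation raises the level of a filtration by at most one, then `δ^e` raises it by at
most the order of `e`. -/
theorem thetaApply_mem {P : ℕ → Set L} {δ : Fin m → L → L}
    (hP : ∀ h i, ∀ u ∈ P h, δ i u ∈ P (h + 1)) (e : Fin m → ℕ) {h : ℕ} {u : L} (hu : u ∈ P h) :
    thetaApply δ e u ∈ P (h + ∑ i, e i) := by
  induction m with
  | zero => simpa [thetaApply] using hu
  | succ m ih =>
    have hiter (k n : ℕ) (v : L) (hv : v ∈ P n) : (δ 0)^[k] v ∈ P (n + k) := by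
      induction k with
      | zero => exact hv
      | succ k ihk => rw [Function.iterate_succ_apply']; exact hP _ _ _ ihk
    rw [thetaApply_succ, Fin.sum_univ_succ, add_comm (e 0), ← add_assoc]
    exact hiter _ _ _ (ih (fun h i => hP h i.succ) _)

variable {n : ℕ}

/-- The elements `δ^e (η j)` with `e` of order at most `s`. -/
def derivativesUpTo (δ : Fin m → L → L) (η : Fin n → L) (s : ℕ) : Set L :=
  {x : L | ∃ e : Fin m → ℕ, (∑ i, e i) ≤ s ∧ ∃ j : Fin n, x = thetaApply δ e (η j)}

theorem finite_derivativesUpTo (δ : Fin m → L → L) (η : Fin n → L) (s : ℕ) :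
    (derivativesUpTo δ η s).Finite := by
  refine (((Set.finite_Iic (fun _ : Fin m => s)).prod (Set.finite_univ (α := Fin n))).image
    (fun a => thetaApply δ a.1 (η a.2))).subset ?_
  rintro _ ⟨e, he, j, rfl⟩
  exact ⟨(e, j), ⟨fun i => (Finset.single_le_sum (fun _ _ => Nat.zero_le _)
    (Finset.mem_univ i)).trans he, trivial⟩, rfl⟩

theorem derivativesUpTo_mono (δ : Fin m → L → L) (η : Fin n → L) :
    Monotone (derivativesUpTo δ η) := by
  rintro s t hst _ ⟨e, he, hj⟩
  exact ⟨e, he.trans hst, hj⟩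

end Theta

section DiffField

variable {L : Type*} [Field L] {m n : ℕ} {δ : Fin m → L → L}

theorem diffTrdeg_le_of_base_le {K K' : Subfield L} (h : K ≤ K') (η : Fin n → L) (s : ℕ) :
    diffTrdeg δ K' η s ≤ diffTrdeg δ K η s :=
  Cardinal.toNat_le_toNat (trdeg_adjoin_le_of_le h _)
    (trdeg_adjoin_lt_aleph0 K (finite_derivativesUpTo δ η s))

theorem le_diffAdjoin (K : Subfield L) (S : Set L) : K ≤ diffAdjoin δ K S :=
  le_sInf fun _ hF => hF.2.1

theorem subset_diffAdjoin (K : Subfield L) (S : Set L) : S ⊆ diffAdjoin δ K S := by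
  intro x hx
  exact Subfield.mem_sInf.mpr fun F hF => hF.2.2 hx

theorem isDiffSubfield_diffAdjoin (K : Subfield L) (S : Set L) :
    IsDiffSubfield δ (diffAdjoin δ K S) := fun i x hx =>
  Subfield.mem_sInf.mpr fun F hF => hF.1 i x (Subfield.mem_sInf.mp hx F hF)

theorem apply_one_of_leibniz {d : L → L} (hleib : ∀ x y, d (x * y) = x * d y + d x * y) :
    d 1 = 0 := by
  simpa using hleib 1 1

theorem apply_inv_of_leibniz {d : L → L} (hadd : ∀ x y, d (x + y) = d x + d y)
    (hleib : ∀ x y, d (x * y) = x * d y + d x * y) (a : L) :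
    d a⁻¹ = -(a⁻¹ * a⁻¹ * d a) := by
  by_cases ha : a = 0
  · subst ha
    have h0 : d 0 = 0 := by simpa using hadd 0 0
    simp [h0]
  · have h := hleib a a⁻¹
    rw [mul_inv_cancel₀ ha, apply_one_of_leibniz hleib] at h
    field_simp
    field_simp at h
    linear_combination -h

theorem apply_mem_adjoin_derivativesUpTo
    (hadd : ∀ i x y, δ i (x + y) = δ i x + δ i y)
    (hleib : ∀ i x y, δ i (x * y) = x * δ i y + δ i x * y)
    (hcomm : ∀ i j x, δ i (δ j x) = δ j (δ i x))
    {K : Subfield L} (hK : IsDiffSubfield δ K) (η : Fin n → L) (s : ℕ) (i : Fin m) {u : L}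
    (hu : u ∈ IntermediateField.adjoin K (derivativesUpTo δ η s)) :
    δ i u ∈ IntermediateField.adjoin K (derivativesUpTo δ η (s + 1)) := by
  have hle : IntermediateField.adjoin K (derivativesUpTo δ η s) ≤
      IntermediateField.adjoin K (derivativesUpTo δ η (s + 1)) :=
    IntermediateField.adjoin.mono _ _ _ (derivativesUpTo_mono δ η s.le_succ)
  induction hu using IntermediateField.adjoin_induction with
  | mem x hx =>
    obtain ⟨e, he, j, rfl⟩ := hx
    refine IntermediateField.subset_adjoin _ _
      ⟨e + Pi.single i 1, ?_, j, apply_thetaApply hcomm i e _⟩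
    simpa [Finset.sum_add_distrib] using he
  | algebraMap x =>
    exact IntermediateField.algebraMap_mem _ (⟨δ i x, hK i x x.2⟩ : K)
  | add x y hx hy h₁ h₂ => rw [hadd]; exact add_mem h₁ h₂
  | inv x hx h =>
    rw [apply_inv_of_leibniz (hadd i) (hleib i)]
    exact neg_mem (mul_mem (mul_mem (inv_mem (hle hx)) (inv_mem (hle hx))) h)
  | mul x y hx hy h₁ h₂ =>
    rw [hleib]
    exact add_mem (mul_mem (hle hx) h₂) (mul_mem h₁ (hle hy))

/-- Every element of `K⟨η⟩` is a rational function of finitely many derivatives of `η`. -/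
theorem exists_mem_adjoin_derivativesUpTo
    (hadd : ∀ i x y, δ i (x + y) = δ i x + δ i y)
    (hleib : ∀ i x y, δ i (x * y) = x * δ i y + δ i x * y)
    (hcomm : ∀ i j x, δ i (δ j x) = δ j (δ i x))
    {K : Subfield L} (hK : IsDiffSubfield δ K) (η : Fin n → L) {u : L}
    (hu : u ∈ diffAdjoin δ K (Set.range η)) :
    ∃ s, u ∈ IntermediateField.adjoin K (derivativesUpTo δ η s) := by
  let F : ℕ → Subfield L := fun s =>
    (IntermediateField.adjoin K (derivativesUpTo δ η s)).toSubfield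
  have hF : Monotone F := fun s t hst =>
    IntermediateField.adjoin.mono _ _ _ (derivativesUpTo_mono δ η hst)
  have hmem (v : L) : v ∈ iSup F ↔ ∃ s, v ∈ F s :=
    Subfield.mem_iSup_of_directed hF.directed_le
  refine (hmem u).mp (Subfield.mem_sInf.mp hu _ ⟨?_, ?_, ?_⟩)
  · intro i v hv
    obtain ⟨s, hs⟩ := (hmem v).mp hv
    exact (hmem _).mpr ⟨s + 1, apply_mem_adjoin_derivativesUpTo hadd hleib hcomm hK η s i hs⟩
  · exact fun v hv => (hmem v).mpr
      ⟨0, IntermediateField.algebraMap_mem (IntermediateField.adjoin K _) (⟨v, hv⟩ : K)⟩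
  · rintro _ ⟨j, rfl⟩
    exact (hmem _).mpr ⟨0, IntermediateField.subset_adjoin _ _
      ⟨0, by simp, j, (thetaApply_zero δ _).symm⟩⟩

/-- If `η` lies in `K⟨ζ⟩`, then its derivatives of order `≤ s` are rational functions of the
derivatives of `ζ` of order `≤ s + h`, for a fixed `h`. -/
theorem exists_diffTrdeg_le_add
    (hadd : ∀ i x y, δ i (x + y) = δ i x + δ i y)
    (hleib : ∀ i x y, δ i (x * y) = x * δ i y + δ i x * y)
    (hcomm : ∀ i j x, δ i (δ j x) = δ j (δ i x))
    {K : Subfield L} (hK : IsDiffSubfield δ K) {k : ℕ} (η : Fin n → L) (ζ : Fin k → L)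
    (h : ∀ j, η j ∈ diffAdjoin δ K (Set.range ζ)) :
    ∃ r, ∀ s, diffTrdeg δ K η s ≤ diffTrdeg δ K ζ (s + r) := by
  choose f hf using fun j => exists_mem_adjoin_derivativesUpTo hadd hleib hcomm hK ζ (h j)
  refine ⟨∑ j, f j, fun s => Cardinal.toNat_le_toNat (trdeg_le_of_le ?_)
    (trdeg_adjoin_lt_aleph0 K (finite_derivativesUpTo δ ζ _))⟩
  rw [IntermediateField.adjoin_le_iff]
  rintro _ ⟨e, he, j, rfl⟩
  have hmem := thetaApply_mem (P := fun t =>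
      (IntermediateField.adjoin K (derivativesUpTo δ ζ t) : Set L))
    (fun t i u hu => apply_mem_adjoin_derivativesUpTo hadd hleib hcomm hK ζ t i hu) e (hf j)
  refine IntermediateField.adjoin.mono _ _ _ (derivativesUpTo_mono δ ζ ?_) hmem
  have := Finset.single_le_sum (fun _ _ => Nat.zero_le _) (Finset.mem_univ j) (f := f)
  omega

end DiffField

section Polynomial

open Filter

theorem Polynomial.leadingCoeff_nonneg_of_eventually {P : ℚ[X]}
    (h : ∀ᶠ s : ℕ in atTop, 0 ≤ P.eval (s : ℚ)) : 0 ≤ P.leadingCoeff := by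
  by_contra! hneg
  by_cases hd : 0 < P.degree
  · have ht := (P.tendsto_atBot_of_leadingCoeff_nonpos hd hneg.le).comp
      (tendsto_natCast_atTop_atTop (R := ℚ))
    obtain ⟨s, hs, hs'⟩ := (h.and (ht.eventually_lt_atBot 0)).exists
    exact absurd hs (not_le.mpr hs')
  · rw [eq_C_of_degree_le_zero (not_lt.mp hd)] at h hneg
    obtain ⟨s, hs⟩ := h.exists
    rw [eval_C] at hs
    rw [leadingCoeff_C] at hneg
    exact absurd hs (not_le.mpr hneg)

theorem Polynomial.degree_le_and_leadingCoeff_le_of_eventually_le {P Q : ℚ[X]}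
    (hP : ∀ᶠ s : ℕ in atTop, 0 ≤ P.eval (s : ℚ))
    (h : ∀ᶠ s : ℕ in atTop, P.eval (s : ℚ) ≤ Q.eval (s : ℚ)) :
    P.degree ≤ Q.degree ∧ (P.degree = Q.degree → P.leadingCoeff ≤ Q.leadingCoeff) := by
  have hsub : 0 ≤ (Q - P).leadingCoeff :=
    leadingCoeff_nonneg_of_eventually (h.mono fun s hs => by simpa using hs)
  have hP0 := leadingCoeff_nonneg_of_eventually hP
  refine ⟨?_, fun heq => ?_⟩
  · by_contra! hlt
    rw [leadingCoeff_sub_of_degree_lt' hlt] at hsub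
    have : P = 0 := leadingCoeff_eq_zero.mp (by linarith)
    simp [this] at hlt
  · by_cases hlc : P.leadingCoeff = Q.leadingCoeff
    · exact hlc.le
    · rw [leadingCoeff_sub_of_degree_eq heq.symm (Ne.symm hlc)] at hsub
      linarith

end Polynomial

/-- Lemma 2.5 of the paper (translation lemma): if `A⟨x⟩⟨y⟩ = A⟨x⟩⟨z⟩` and `y` is independent
from `x` over `A` (some Kolchin polynomial of `y` over `A⟨x⟩` is also one over `A`), then
`τ(y/A) ≤ τ(z/A)`, and in case of equality `α(y/A) ≤ α(z/A)`. -/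
theorem type_le_of_interdefinable_of_indep
    {L : Type*} [Field L] [CharZero L] {m : ℕ} (hm : 1 ≤ m)
    (δ : Fin m → L → L)
    (hadd : ∀ i : Fin m, ∀ x' y' : L, δ i (x' + y') = δ i x' + δ i y')
    (hleib : ∀ i : Fin m, ∀ x' y' : L, δ i (x' * y') = x' * δ i y' + δ i x' * y')
    (hcomm : ∀ i j : Fin m, ∀ x' : L, δ i (δ j x') = δ j (δ i x'))
    (A : Subfield L) (hA : IsDiffSubfield δ A)
    {n₁ n₂ n₃ : ℕ} (x : Fin n₁ → L) (y : Fin n₂ → L) (z : Fin n₃ → L)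
    (hgen : diffAdjoin δ (diffAdjoin δ A (Set.range x)) (Set.range y) =
            diffAdjoin δ (diffAdjoin δ A (Set.range x)) (Set.range z))
    (hindep : ∃ f : ℚ[X],
      IsKolchinPoly δ (diffAdjoin δ A (Set.range x)) y f ∧ IsKolchinPoly δ A y f)
    (p q : ℚ[X])
    (hp : IsKolchinPoly δ A y p)
    (hq : IsKolchinPoly δ A z q) :
    p.degree ≤ q.degree ∧ (p.degree = q.degree → p.leadingCoeff ≤ q.leadingCoeff) := by
  set B := diffAdjoin δ A (Set.range x)
  have hB : IsDiffSubfield δ B := isDiffSubfield_diffAdjoin A _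
  obtain ⟨r, hr⟩ := exists_diffTrdeg_le_add hadd hleib hcomm hB y z
    fun j => hgen ▸ subset_diffAdjoin B (Set.range y) (Set.mem_range_self j)
  obtain ⟨f, ⟨s₁, h₁⟩, ⟨s₂, h₂⟩⟩ := hindep
  obtain ⟨s₃, h₃⟩ := hp
  obtain ⟨s₄, h₄⟩ := hq
  have key := degree_le_and_leadingCoeff_le_of_eventually_le (P := p) (Q := q.comp (X + C (r : ℚ)))
    (by
      filter_upwards [Filter.eventually_ge_atTop s₃] with s hs
      rw [h₃ s hs]
      positivity)
    (by
      filter_upwards [Filter.eventually_ge_atTop s₁, Filter.eventually_ge_atTop s₂,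
        Filter.eventually_ge_atTop s₃,
        Filter.eventually_ge_atTop s₄] with s hs₁ hs₂ hs₃ hs₄
      have hz := h₄ (s + r) (by omega)
      push_cast at hz
      rw [h₃ s hs₃, ← h₂ s hs₂, h₁ s hs₁, eval_comp, eval_add, eval_X, eval_C, hz]
      exact_mod_cast (hr s).trans (diffTrdeg_le_of_base_le (le_diffAdjoin A _) z _))
  have hdeg : (q.comp (X + C (r : ℚ))).degree = q.degree := by
    rw [← taylor_apply, degree_taylor]
  have hlead : (q.comp (X + C (r : ℚ))).leadingCoeff = q.leadingCoeff := by
    rw [← taylor_apply, leadingCoeff_taylor]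
  rwa [hdeg, hlead] at key
end
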